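/- There exists a finitely generated group Q which is sofic but not residually amenable: Q admits no family of homomorphisms into groups satisfying the Følner condition that separates the elements of Q; i.e., there exists some g ∈ Q with g ≠ 1 such that every group homomorphism φ from Q into a group satisfying the Følner condition has φ(g) = 1. -/

import Mathlib

/-- Two self-maps of a finite set `A` are `ε`-similar if the number of points where they
differ is at most `ε·|A|`. They are `(1-ε)`-different if they are not `(1-ε)`-similar. -/
def EpsSimilar {A : Type*} [Fintype A] (ε : ℝ) (e f : A → A) : Prop :=
  (Nat.card {a : A // e a ≠ f a} : ℝ) ≤ ε * Fintype.card A

/-- An `(F, ε)`-quasi-action of a group `G` on a finite set `A`: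
(a) `φ(ef)` is `ε`-similar to `φ(e)` followed by `φ(f)` for `e, f ∈ F`;
(b) `φ(1)` is `ε`-similar to the identity;
(c) for `1 ≠ e ∈ F`, `φ(e)` is `(1-ε)`-different from the identity. -/
def IsQuasiAction {G : Type*} [Group G] (F : Finset G) (ε : ℝ)
    {A : Type*} [Fintype A] (φ : G → A → A) : Prop :=
  (∀ e ∈ F, ∀ f ∈ F, EpsSimilar ε (φ (e * f)) (fun a => φ f (φ e a))) ∧
  EpsSimilar ε (φ 1) id ∧
  (∀ e ∈ F, e ≠ 1 → ¬ EpsSimilar (1 - ε) (φ e) id)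

/-- A group `G` is sofic if for every finite subset `F ⊆ G` and every `ε ∈ (0,1)` there is an
`(F, ε)`-quasi-action of `G` on some finite nonempty set. -/
def IsSofic (G : Type*) [Group G] : Prop :=
  ∀ (F : Finset G) (ε : ℝ), 0 < ε → ε < 1 →
    ∃ (A : Type) (_ : Fintype A) (_ : Nonempty A) (φ : G → A → A),
      IsQuasiAction F ε φ

/-- A group `M` satisfies the Følner condition (is amenable as a discrete group) if for every
finite `F ⊆ M` and every `ε > 0` there is a nonempty finite `A ⊆ M` with
`|A·g \ A| ≤ ε·|A|` for all `g ∈ F`. -/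
def FolnerCondition (M : Type*) [Group M] : Prop :=
  ∀ (F : Finset M) (ε : ℝ), 0 < ε →
    ∃ A : Finset M, A.Nonempty ∧
      ∀ g ∈ F, ((((fun a => a * g) '' (A : Set M)) \ (A : Set M)).ncard : ℝ) ≤ ε * A.card

open Filter Pointwise
open scoped commutatorElement

/-!
For an infinite group `G`, let `Q = FSym(G) ⋊ G` be the lampshuffler group, realised as the
permutations of `G` that agree with a left translation off a finite set. If `G` is residually
finite, such permutations are imitated by permutations of the finite quotients of `G`: a
translation by the translation by its image, a transposition `(p q)` by the transposition of the
images of `p` and `q`. On deep enough quotients this is multiplicative and injective on any given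
finite set, so `Q` is locally embeddable into finite groups, and hence sofic.

Let now `G` be free of rank two and `φ` a homomorphism from `Q` to an amenable group. As `G` is
not amenable, `φ` has a nontrivial, hence infinite, kernel on `G`. Conjugating a transposition
`(p q)` by a translation in this kernel that is chosen to move `p` and `q` away from `r` and `s`
does not change its image, so `φ (p q)` and `φ (r s)` commute. Thus `φ` kills the commutator of two
overlapping transpositions, which is a 3-cycle.
-/

section Sofic

lemma EpsSimilar.refl {A : Type*} [Fintype A] {ε : ℝ} (hε : 0 ≤ ε) (e : A → A) :
    EpsSimilar ε e e := by
  simpa [EpsSimilar] using by positivity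

lemma not_epsSimilar_of_forall_ne {A : Type*} [Fintype A] [Nonempty A] {δ : ℝ} (hδ : δ < 1)
    {e f : A → A} (hne : ∀ a, e a ≠ f a) : ¬ EpsSimilar δ e f := by
  have hcard : Nat.card {a // e a ≠ f a} = Fintype.card A := by
    rw [Nat.card_congr (Equiv.subtypeUnivEquiv hne), Nat.card_eq_fintype_card]
  have hpos : (0 : ℝ) < Fintype.card A := mod_cast Fintype.card_pos
  rw [EpsSimilar, hcard, not_le]
  exact mul_lt_of_lt_one_left hpos hδ

universe u

/-- A group is *LEF* (locally embeddable into finite groups) if each of its finite subsets is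
mapped injectively into a finite group by a map that is multiplicative on that subset. As the
target is finite, taking it in the universe of `G` is no restriction. -/
def IsLEF (G : Type u) [Group G] : Prop :=
  ∀ F : Finset G, ∃ (K : Type u) (_ : Group K) (_ : Finite K) (s : G → K),
    (∀ a ∈ F, ∀ b ∈ F, s (a * b) = s a * s b) ∧ Set.InjOn s F

variable {G : Type u} [Group G]

theorem IsLEF.of_eventually {ι : Type*} {l : Filter ι} [l.NeBot] {K : ι → Type u}
    [∀ i, Group (K i)] [∀ i, Finite (K i)] (s : ∀ i, G → K i)
    (hmul : ∀ a b, ∀ᶠ i in l, s i (a * b) = s i a * s i b)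
    (hne : ∀ a b, a ≠ b → ∀ᶠ i in l, s i a ≠ s i b) : IsLEF G := by
  intro F
  have hmulF : ∀ᶠ i in l, ∀ a ∈ F, ∀ b ∈ F, s i (a * b) = s i a * s i b := by
    simpa only [eventually_all_finset] using fun a _ b _ => hmul a b
  have hneF : ∀ᶠ i in l, ∀ a ∈ F, ∀ b ∈ F, a ≠ b → s i a ≠ s i b := by
    simpa only [eventually_all_finset, eventually_imp_distrib_left] using
      fun a _ b _ => hne a b
  obtain ⟨i, hi, hi'⟩ := (hmulF.and hneF).exists
  exact ⟨K i, inferInstance, inferInstance, s i, hi,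
    fun a ha b hb hab => by_contra fun h => hi' a ha b hb h hab⟩

theorem IsLEF.isSofic (hG : IsLEF G) : IsSofic G := by
  classical
  intro F ε hε _
  obtain ⟨K, _, _, s, hmul, hinj⟩ := hG (insert 1 F)
  have hone : s 1 = 1 := by simpa using hmul 1 (by simp) 1 (by simp)
  let t : G → Shrink.{0} K := Shrink.mulEquiv.symm ∘ s
  obtain ⟨_⟩ := nonempty_fintype (Shrink.{0} K)
  refine ⟨Shrink.{0} K, inferInstance, inferInstance, fun g a => a * t g, ?_, ?_, ?_⟩
  · intro a ha b hb
    have htmul : t (a * b) = t a * t b := by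
      simp [t, hmul a (Finset.mem_insert_of_mem ha) b (Finset.mem_insert_of_mem hb)]
    simpa only [htmul, mul_assoc] using EpsSimilar.refl hε.le _
  · have htone : t 1 = 1 := by simp [t, hone]
    have hid : (fun a => a * t 1) = id := funext fun a => by rw [htone, mul_one, id]
    simpa only [hid] using EpsSimilar.refl hε.le id
  · intro a ha ha1
    have hta : t a ≠ 1 := by
      simpa [t, ← hone] using
        hinj.ne (Finset.mem_insert_of_mem ha) (Finset.mem_insert_self 1 F) ha1
    exact not_epsSimilar_of_forall_ne (by linarith) fun x hx => hta (mul_eq_left.mp hx)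

end Sofic

section Folner

lemma folnerCondition_iff_card_filter {M : Type*} [Group M] [DecidableEq M] :
    FolnerCondition M ↔ ∀ (F : Finset M) (ε : ℝ), 0 < ε → ∃ A : Finset M, A.Nonempty ∧
      ∀ g ∈ F, ((A.filter fun a => a * g ∉ A).card : ℝ) ≤ ε * A.card := by
  have hcard : ∀ (A : Finset M) (g : M), (((fun a => a * g) '' (A : Set M)) \ A).ncard =
      (A.filter fun a => a * g ∉ A).card := by
    intro A g
    have himage : ((fun a => a * g) '' (A : Set M)) \ A =
        (fun a => a * g) '' (A.filter fun a => a * g ∉ A : Finset M) := by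
      ext; aesop
    rw [himage, Set.ncard_image_of_injective _ (mul_left_injective g), Set.ncard_coe_finset]
  simp only [FolnerCondition, hcard]

lemma exists_fiber_sum_card_le {α β γ : Type*} [DecidableEq γ] {A : Finset α} (hA : A.Nonempty)
    (f : α → γ) (F : Finset β) (P : β → α → Prop) [∀ g, DecidablePred (P g)] {ε : ℝ}
    (h : ∑ g ∈ F, ((A.filter (P g)).card : ℝ) ≤ ε * A.card) :
    ∃ t ∈ A, ∑ g ∈ F, ((A.filter fun a => P g a ∧ f a = f t).card : ℝ) ≤
      ε * (A.filter fun a => f a = f t).card := by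
  have hfiber (B : Finset α) (hB : B ⊆ A) :
      (B.card : ℝ) = ∑ c ∈ A.image f, ((B.filter fun a => f a = c).card : ℝ) :=
    mod_cast Finset.card_eq_sum_card_fiberwise fun a ha => Finset.mem_image_of_mem f (hB ha)
  have hsum : ∑ c ∈ A.image f, ∑ g ∈ F, ((A.filter fun a => P g a ∧ f a = c).card : ℝ) ≤
      ∑ c ∈ A.image f, ε * ((A.filter fun a => f a = c).card : ℝ) := by
    rw [Finset.sum_comm, ← Finset.mul_sum, ← hfiber A subset_rfl]
    simpa only [← Finset.filter_filter, ← hfiber _ (Finset.filter_subset _ A)] using h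
  obtain ⟨c, hc, hle⟩ := Finset.exists_le_of_sum_le (hA.image f) hsum
  obtain ⟨t, ht, rfl⟩ := Finset.mem_image.1 hc
  exact ⟨t, ht, hle⟩

lemma card_filter_preimage_mul_left {G H : Type*} [Group G] [Group H] {j : H →* G}
    (hj : Function.Injective j) [DecidableEq (G ⧸ j.range)] (A : Finset G) (t : G)
    (P : G → Prop) [DecidablePred P] :
    ((A.preimage (fun b => t * j b) ((mul_right_injective t).comp hj).injOn).filter
      fun b => P (t * j b)).card = (A.filter fun a => P a ∧ (a : G ⧸ j.range) = t).card := by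
  classical
  have hcoset (a : G) : (a : G ⧸ j.range) = t ↔ ∃ b, t * j b = a := by
    rw [eq_comm, QuotientGroup.eq]
    simp only [MonoidHom.mem_range, eq_inv_mul_iff_mul_eq]
  rw [← Finset.card_image_of_injective _ ((mul_right_injective t).comp hj)]
  congr 1
  ext a
  simp only [Finset.mem_image, Finset.mem_filter, Finset.mem_preimage, Function.comp_apply, hcoset]
  constructor
  · rintro ⟨b, ⟨hbA, hbP⟩, rfl⟩
    exact ⟨hbA, hbP, b, rfl⟩
  · rintro ⟨haA, haP, b, rfl⟩
    exact ⟨b, ⟨haA, haP⟩, rfl⟩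

theorem FolnerCondition.of_injective {H G : Type*} [Group H] [Group G] (hG : FolnerCondition G)
    (j : H →* G) (hj : Function.Injective j) : FolnerCondition H := by
  classical
  rw [folnerCondition_iff_card_filter] at hG ⊢
  intro F ε hε
  obtain ⟨A, hA, hAF⟩ := hG (F.image j) (ε / (F.card + 1)) (by positivity)
  have hsum : ∑ h ∈ F, ((A.filter fun a => a * j h ∉ A).card : ℝ) ≤ ε * A.card := calc
    _ ≤ ∑ _h ∈ F, ε / (F.card + 1) * A.card :=
      Finset.sum_le_sum fun h hh => hAF _ (Finset.mem_image_of_mem j hh)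
    _ = F.card / (F.card + 1) * (ε * A.card) := by
      rw [Finset.sum_const, nsmul_eq_mul]; ring
    _ ≤ ε * A.card := mul_le_of_le_one_left (by positivity) <|
      (div_le_one (by positivity)).2 (by linarith)
  -- By averaging, some coset `t * j.range` meets `A` in a set that is almost invariant too.
  obtain ⟨t, ht, htF⟩ := exists_fiber_sum_card_le hA
    (QuotientGroup.mk : G → G ⧸ j.range) F (fun h a => a * j h ∉ A) hsum
  refine ⟨A.preimage (fun b => t * j b) ((mul_right_injective t).comp hj).injOn,
    ⟨1, by simpa using ht⟩, fun h hh => ?_⟩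
  have hle := (Finset.single_le_sum (fun _ _ => Nat.cast_nonneg _) hh).trans htF
  have hcard := card_filter_preimage_mul_left hj A t fun _ => True
  have hcard' := card_filter_preimage_mul_left hj A t fun a => a * j h ∉ A
  simp only [true_and, Finset.filter_true] at hcard
  rw [← hcard, ← hcard'] at hle
  simpa [mul_assoc] using hle

end Folner

section FreeGroup

open FreeGroup hiding mk map_mul map_one

variable {α : Type*}

open Classical in
lemma card_le_card_startsWith_inv_add [DecidableEq α] (x : α) (A : Finset (FreeGroup α)) :
    A.card ≤ (A.filter fun a => ∃ b, a⁻¹ ∈ startsWith (x, b)).card +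
      (A.filter fun a => a * (of x)⁻¹ ∉ A).card := by
  let S (b : Bool) : Finset (FreeGroup α) := A.filter fun a => a⁻¹ ∈ startsWith (x, b)
  have hS : (A.filter fun a => ∃ b, a⁻¹ ∈ startsWith (x, b)) = S false ∪ S true := by
    simp only [S, ← Finset.filter_or, Bool.exists_bool]
  have hdisj : Disjoint (S false) (S true) := Finset.disjoint_filter.2 fun a _ ha =>
    (startsWith.disjoint_iff_ne.2 (by simp)).notMem_of_mem_left ha
  let D : Finset (FreeGroup α) := A.filter fun a => a * (of x)⁻¹ ∉ A
  have hcover : A ⊆ S false ∪ (S true).image (· * of x) ∪ D := by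
    intro a ha
    by_cases haA : a * (of x)⁻¹ ∈ A
    · refine Finset.mem_union_left _ (Finset.mem_union.2 ?_)
      refine or_iff_not_imp_left.2 fun haS => ?_
      have hstart : (a * (of x)⁻¹)⁻¹ ∈ startsWith (x, true) := by
        rw [mul_inv_rev, inv_inv]
        exact startsWith_mk_mul _ fun h => haS (Finset.mem_filter.2 ⟨ha, h⟩)
      exact Finset.mem_image.2
        ⟨_, Finset.mem_filter.2 ⟨haA, hstart⟩, inv_mul_cancel_right a (of x)⟩
    · exact Finset.mem_union_right _ (Finset.mem_filter.2 ⟨ha, haA⟩)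
  rw [hS, Finset.card_union_of_disjoint hdisj]
  calc A.card ≤ (S false ∪ (S true).image (· * of x) ∪ D).card := Finset.card_le_card hcover
    _ ≤ (S false).card + ((S true).image (· * of x)).card + D.card :=
      (Finset.card_union_le _ _).trans (Nat.add_le_add_right (Finset.card_union_le _ _) _)
    _ ≤ (S false).card + (S true).card + D.card :=
      Nat.add_le_add_right (Nat.add_le_add_left Finset.card_image_le _) _

theorem not_folnerCondition_freeGroup [Nontrivial α] : ¬ FolnerCondition (FreeGroup α) := by
  classical
  rw [folnerCondition_iff_card_filter]
  intro h
  obtain ⟨x, y, hxy⟩ := exists_pair_ne α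
  obtain ⟨A, hA, hAF⟩ := h {(of x)⁻¹, (of y)⁻¹} (1 / 4) (by norm_num)
  let W (z : α) : Finset (FreeGroup α) := A.filter fun a => ∃ b, a⁻¹ ∈ startsWith (z, b)
  have hle (z : α) (hz : (of z)⁻¹ ∈ ({(of x)⁻¹, (of y)⁻¹} : Finset (FreeGroup α))) :
      (3 / 4 : ℝ) * A.card ≤ (W z).card := by
    have hcard : (A.card : ℝ) ≤ (W z).card + (A.filter fun a => a * (of z)⁻¹ ∉ A).card :=
      mod_cast card_le_card_startsWith_inv_add z A
    have hz' := hAF _ hz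
    linarith
  have hdisj : Disjoint (W x) (W y) := Finset.disjoint_filter.2 fun a _ ⟨b, hb⟩ ⟨c, hc⟩ =>
    (startsWith.disjoint_iff_ne.2 (by simp [hxy])).notMem_of_mem_left hb hc
  have hWA : ((W x).card : ℝ) + (W y).card ≤ A.card := by
    rw [← Nat.cast_add, ← Finset.card_union_of_disjoint hdisj]
    exact mod_cast Finset.card_le_card
      (Finset.union_subset (Finset.filter_subset _ A) (Finset.filter_subset _ A))
  have hpos : (0 : ℝ) < A.card := mod_cast hA.card_pos
  linarith [hle x (by simp), hle y (by simp)]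

lemma exists_perm_extending_mulLeft {G : Type*} [Mul G] [IsLeftCancelMul G] (S : Set G) [Finite S]
    (g : G) : ∃ σ : Equiv.Perm S, ∀ x y : S, g * x = y → σ x = y := by
  obtain ⟨σ, hσ⟩ := Equiv.Perm.exists_extending_pair
    (fun x : {x : S // g * x ∈ S} => x.1) (fun x => (⟨g * x.1, x.2⟩ : S))
    Subtype.val_injective
    (fun x y h => Subtype.ext (Subtype.ext (mul_left_cancel (congrArg Subtype.val h))))
  refine ⟨σ, fun x y hxy => ?_⟩
  have hx : g * x ∈ S := hxy ▸ y.2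
  exact (hσ ⟨x, hx⟩).trans (Subtype.ext hxy)

lemma exists_hom_perm_extending_mulLeft (S : Set (FreeGroup α)) [Finite S] :
    ∃ π : FreeGroup α →* Equiv.Perm S, ∀ (w : α × Bool) (x y : S),
      FreeGroup.mk [w] * x = (y : FreeGroup α) → π (FreeGroup.mk [w]) x = y := by
  choose ρ hρ using fun i : α => exists_perm_extending_mulLeft S (of i)
  refine ⟨lift ρ, ?_⟩
  rintro ⟨i, _ | _⟩ x y hxy
  · have hyx : of i * (y : FreeGroup α) = x := by
      rw [← hxy, ← mul_assoc]
      exact mul_eq_right.2 (mul_inv_cancel (of i))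
    have hinv : lift ρ (FreeGroup.mk [(i, false)]) = (ρ i)⁻¹ := by simp
    rw [hinv, Equiv.Perm.inv_eq_iff_eq, hρ i y x hyx]
  · have hof : lift ρ (FreeGroup.mk [(i, true)]) = ρ i := by simp
    rw [hof, hρ i x y hxy]

lemma exists_hom_perm_apply_one (g : FreeGroup α) :
    ∃ (S : Set (FreeGroup α)) (_ : Finite S) (h1 : 1 ∈ S) (π : FreeGroup α →* Equiv.Perm S),
      (π g ⟨1, h1⟩ : FreeGroup α) = g := by
  obtain ⟨L, rfl⟩ : ∃ L, FreeGroup.mk L = g := Quot.exists_rep g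
  let S : Set (FreeGroup α) := FreeGroup.mk '' {M | M ∈ L.tails}
  have : Finite S := ((List.finite_toSet L.tails).image FreeGroup.mk).to_subtype
  have hmem (M : List (α × Bool)) (hM : M <:+ L) : FreeGroup.mk M ∈ S :=
    ⟨M, (List.mem_tails M L).2 hM, rfl⟩
  obtain ⟨π, hπ⟩ := exists_hom_perm_extending_mulLeft S
  have h1 : 1 ∈ S := hmem [] List.nil_suffix
  have hsuffix (M : List (α × Bool)) (hM : M <:+ L) :
      (π (FreeGroup.mk M) ⟨1, h1⟩ : FreeGroup α) = FreeGroup.mk M := by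
    induction M with
    | nil => exact congrArg (fun σ : Equiv.Perm S => (σ ⟨1, h1⟩ : FreeGroup α)) π.map_one
    | cons w M ih =>
      have hcons : FreeGroup.mk (w :: M) = FreeGroup.mk [w] * FreeGroup.mk M := rfl
      rw [hcons, π.map_mul, Equiv.Perm.mul_apply, hπ w _ ⟨_, hmem (w :: M) hM⟩]
      · exact hcons
      · rw [ih ((List.suffix_cons w M).trans hM), ← hcons]
  exact ⟨S, inferInstance, h1, π, hsuffix L List.suffix_rfl⟩

instance residuallyFinite_freeGroup : Group.ResiduallyFinite (FreeGroup α) :=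
  Group.residuallyFinite_of_forall_exists_finite_monoidHom fun g hg => by
    obtain ⟨S, _, h1, π, hπ⟩ := exists_hom_perm_apply_one g
    refine ⟨Equiv.Perm S, inferInstance, inferInstance, π, fun hπg => hg ?_⟩
    rw [← hπ, hπg, Equiv.Perm.one_apply]

end FreeGroup

section Lampshuffler

lemma infinite_of_isMulTorsionFree (G : Type*) [Group G] [IsMulTorsionFree G] [Nontrivial G] :
    Infinite G := by
  obtain ⟨g, hg⟩ := exists_ne (1 : G)
  exact not_finite_iff_infinite.1 fun _ =>
    not_isOfFinOrder_of_isMulTorsionFree hg (isOfFinOrder_of_finite g)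

variable {G : Type*} [Group G]

/-- `σ` agrees with the left translation by `w` outside the set `T`. -/
def IsTranslationOff (σ : Equiv.Perm G) (w : G) (T : Set G) : Prop :=
  ∀ p ∉ T, σ p = w * p

lemma IsTranslationOff.mul {σ τ : Equiv.Perm G} {v w : G} {S T : Set G}
    (hσ : IsTranslationOff σ v S) (hτ : IsTranslationOff τ w T) :
    IsTranslationOff (σ * τ) (v * w) (T ∪ w⁻¹ • S) := by
  intro p hp
  rw [Set.mem_union, not_or, Set.mem_inv_smul_set_iff, smul_eq_mul] at hp
  rw [Equiv.Perm.mul_apply, hτ p hp.1, hσ _ hp.2, mul_assoc]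

lemma IsTranslationOff.inv {σ : Equiv.Perm G} {w : G} {T : Set G}
    (hσ : IsTranslationOff σ w T) : IsTranslationOff σ⁻¹ w⁻¹ (w • T) := by
  intro p hp
  rw [Set.mem_smul_set_iff_inv_smul_mem, smul_eq_mul] at hp
  rw [Equiv.Perm.inv_eq_iff_eq, hσ _ hp, mul_inv_cancel_left]

lemma isTranslationOff_swap [DecidableEq G] (p q : G) :
    IsTranslationOff (Equiv.swap p q) 1 {p, q} := by
  intro x hx
  rw [Set.mem_insert_iff, Set.mem_singleton_iff, not_or] at hx
  rw [Equiv.swap_apply_of_ne_of_ne hx.1 hx.2, one_mul]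

section Lifts

variable {ι : Type*} {K : ι → Type*} [∀ i, Group (K i)]

/-- Pairs of a permutation `σ` of `G` that is a translation off a finite set and a family of
permutations `s i` of the quotients `K i` that asymptotically imitates it: `s i` is the
corresponding translation off the image of the same finite set, and at each point
`π i` eventually intertwines `σ` and `s i`. -/
def asymptoticLifts (l : Filter ι) (π : ∀ i, G →* K i) :
    Subgroup (Equiv.Perm G × ∀ i, Equiv.Perm (K i)) where
  carrier := {σ | (∀ p, ∀ᶠ i in l, σ.2 i (π i p) = π i (σ.1 p)) ∧
    ∃ (w : G) (T : Set G), T.Finite ∧ IsTranslationOff σ.1 w T ∧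
      ∀ i, IsTranslationOff (σ.2 i) (π i w) (π i '' T)}
  one_mem' := ⟨by simp, 1, ∅, by simp [IsTranslationOff]⟩
  mul_mem' := by
    rintro σ τ ⟨hσ, v, S, hS, hvS, hvSi⟩ ⟨hτ, w, T, hT, hwT, hwTi⟩
    refine ⟨fun p => ?_, v * w, T ∪ w⁻¹ • S, hT.union hS.smul_set, hvS.mul hwT, fun i => ?_⟩
    · filter_upwards [hτ p, hσ (τ.1 p)] with i hτi hσi
      simp [hτi, hσi]
    · simpa only [Prod.snd_mul, Pi.mul_apply, map_mul, Set.image_union, Set.image_smul_distrib,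
        map_inv] using (hvSi i).mul (hwTi i)
  inv_mem' := by
    rintro σ ⟨hσ, w, T, hT, hwT, hwTi⟩
    refine ⟨fun p => ?_, w⁻¹, w • T, hT.smul_set, hwT.inv, fun i => ?_⟩
    · filter_upwards [hσ (σ.1⁻¹ p)] with i hi
      rw [Prod.snd_inv, Pi.inv_apply, Equiv.Perm.inv_eq_iff_eq, Prod.fst_inv, hi]
      exact congrArg (π i) (σ.1.apply_symm_apply p).symm
    · simpa only [Prod.snd_inv, Pi.inv_apply, map_inv, Set.image_smul_distrib] using (hwTi i).inv

variable {l : Filter ι} {π : ∀ i, G →* K i}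

lemma toPermHom_mem_asymptoticLifts (g : G) :
    (MulAction.toPermHom G G g, fun i => MulAction.toPermHom (K i) (K i) (π i g)) ∈
      asymptoticLifts l π :=
  ⟨by simp, g, ∅, by simp [IsTranslationOff]⟩

lemma swap_mem_asymptoticLifts [DecidableEq G] [∀ i, DecidableEq (K i)]
    (hπ : ∀ p q, p ≠ q → ∀ᶠ i in l, π i p ≠ π i q) (p q : G) :
    (Equiv.swap p q, fun i => Equiv.swap (π i p) (π i q)) ∈ asymptoticLifts l π := by
  refine ⟨fun x => ?_, 1, {p, q}, by simp, isTranslationOff_swap p q, fun i => ?_⟩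
  · obtain rfl | hp := eq_or_ne x p
    · simp
    obtain rfl | hq := eq_or_ne x q
    · simp
    filter_upwards [hπ x p hp, hπ x q hq] with i hpi hqi
    rw [Equiv.swap_apply_of_ne_of_ne hp hq, Equiv.swap_apply_of_ne_of_ne hpi hqi]
  · simpa only [map_one, Set.image_pair] using isTranslationOff_swap (π i p) (π i q)

lemma eventually_eq_of_mem_asymptoticLifts [Infinite G] {σ : Equiv.Perm G}
    {s t : ∀ i, Equiv.Perm (K i)} (hs : (σ, s) ∈ asymptoticLifts l π)
    (ht : (σ, t) ∈ asymptoticLifts l π) : ∀ᶠ i in l, s i = t i := by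
  obtain ⟨hσs, v, S, hS, hvS, hvSi⟩ := hs
  obtain ⟨hσt, w, T, hT, hwT, hwTi⟩ := ht
  obtain rfl : v = w := by
    obtain ⟨p, hp⟩ := (hS.union hT).exists_notMem
    rw [Set.mem_union, not_or] at hp
    exact mul_right_cancel ((hvS p hp.1).symm.trans (hwT p hp.2))
  have hST : ∀ᶠ i in l, ∀ p ∈ S ∪ T, s i (π i p) = t i (π i p) :=
    (eventually_all_finite (hS.union hT)).2 fun p _ => by
      filter_upwards [hσs p, hσt p] with i hsi hti using hsi.trans hti.symm
  filter_upwards [hST] with i hi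
  ext k
  by_cases hk : k ∈ π i '' (S ∪ T)
  · obtain ⟨p, hp, rfl⟩ := hk
    exact hi p hp
  · rw [Set.image_union, Set.mem_union, not_or] at hk
    exact (hvSi i k hk.1).trans (hwTi i k hk.2).symm

end Lifts

lemma eventually_mk_ne_mk [Group.ResiduallyFinite G] {p q : G} (hpq : p ≠ q) :
    ∀ᶠ N : FiniteIndexNormalSubgroup G in atBot,
      QuotientGroup.mk' N.toSubgroup p ≠ QuotientGroup.mk' N.toSubgroup q := by
  obtain ⟨N₀, hN₀⟩ := Group.exists_finiteIndexNormalSubgroup_of_residuallyFinite p q hpq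
  filter_upwards [eventually_le_atBot N₀] with N hN h
  exact hN₀ (QuotientGroup.eq.2 (hN (QuotientGroup.eq.1 h)))

variable (G) [DecidableEq G]

/-- The lampshuffler group of `G`, that is the semidirect product `FSym(G) ⋊ G` for the
translation action, realised (for infinite `G`) as the permutations of `G` that agree
with a left translation off a finite set. -/
def lampshuffler : Subgroup (Equiv.Perm G) :=
  (MulAction.toPermHom G G).range ⊔ Subgroup.closure {σ | σ.IsSwap}

variable {G}

lemma toPermHom_mem_lampshuffler (g : G) : MulAction.toPermHom G G g ∈ lampshuffler G :=
  Subgroup.mem_sup_left ⟨g, rfl⟩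

lemma swap_mem_lampshuffler (p q : G) : Equiv.swap p q ∈ lampshuffler G := by
  obtain rfl | hpq := eq_or_ne p q
  · rw [Equiv.swap_self]
    exact one_mem _
  · exact Subgroup.mem_sup_right (Subgroup.subset_closure ⟨p, q, hpq, rfl⟩)

lemma lampshuffler_le_iff {H : Subgroup (Equiv.Perm G)} :
    lampshuffler G ≤ H ↔ (∀ g, MulAction.toPermHom G G g ∈ H) ∧ ∀ p q, Equiv.swap p q ∈ H := by
  refine ⟨fun h => ⟨fun g => h (toPermHom_mem_lampshuffler g),
    fun p q => h (swap_mem_lampshuffler p q)⟩, fun ⟨htrans, hswap⟩ => sup_le ?_ ?_⟩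
  · rintro _ ⟨g, rfl⟩
    exact htrans g
  · rw [Subgroup.closure_le]
    rintro _ ⟨p, q, -, rfl⟩
    exact hswap p q

lemma swap_mul_left (g p q : G) : Equiv.swap (g * p) (g * q) =
    MulAction.toPermHom G G g * Equiv.swap p q * (MulAction.toPermHom G G g)⁻¹ :=
  Equiv.swap_apply_apply (MulAction.toPermHom G G g) p q

theorem lampshuffler_fg [Group.FG G] : Group.FG (lampshuffler G) := by
  obtain ⟨S, hS, hSfin⟩ := Group.fg_iff.mp ‹Group.FG G›
  let H : Subgroup (Equiv.Perm G) :=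
    Subgroup.closure (MulAction.toPermHom G G '' S ∪ Equiv.swap 1 '' S)
  have htrans (g : G) : MulAction.toPermHom G G g ∈ H := by
    have hle : (⊤ : Subgroup G) ≤ H.comap (MulAction.toPermHom G G) := by
      rw [← hS, Subgroup.closure_le]
      exact fun s hs => Subgroup.subset_closure (Or.inl ⟨s, hs, rfl⟩)
    exact hle (Subgroup.mem_top g)
  have hmul_left {p q : G} (g : G) (h : Equiv.swap p q ∈ H) : Equiv.swap (g * p) (g * q) ∈ H := by
    rw [swap_mul_left]
    exact mul_mem (mul_mem (htrans g) h) (inv_mem (htrans g))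
  have hswap_one (g : G) : Equiv.swap 1 g ∈ H := by
    induction (hS ▸ Subgroup.mem_top g : g ∈ Subgroup.closure S) using
      Subgroup.closure_induction with
    | mem s hs => exact Subgroup.subset_closure (Or.inr ⟨s, hs, rfl⟩)
    | one => exact Equiv.swap_self (1 : G) ▸ one_mem H
    | mul g h _ _ hg hh =>
      exact SubmonoidClass.swap_mem_trans H hg (by simpa only [mul_one] using hmul_left g hh)
    | inv g _ hg =>
      simpa only [inv_mul_cancel, mul_one, Equiv.swap_comm] using hmul_left g⁻¹ hg
  have hle : lampshuffler G ≤ H := lampshuffler_le_iff.2 ⟨htrans, fun p q => by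
    simpa only [mul_one, mul_inv_cancel_left] using hmul_left p (hswap_one (p⁻¹ * q))⟩
  have hge : H ≤ lampshuffler G := by
    rw [Subgroup.closure_le]
    rintro _ (⟨s, -, rfl⟩ | ⟨s, -, rfl⟩)
    exacts [toPermHom_mem_lampshuffler s, swap_mem_lampshuffler 1 s]
  rw [Group.fg_iff_subgroup_fg, Subgroup.fg_iff]
  exact ⟨_, hge.antisymm hle, (hSfin.image _).union (hSfin.image _)⟩

theorem lampshuffler_isLEF [Infinite G] [Group.ResiduallyFinite G] : IsLEF (lampshuffler G) := by
  classical
  have : Nonempty (FiniteIndexNormalSubgroup G) := ⟨.ofSubgroup ⊤⟩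
  let π (N : FiniteIndexNormalSubgroup G) : G →* G ⧸ N.toSubgroup := QuotientGroup.mk' _
  have hπ : ∀ p q, p ≠ q → ∀ᶠ N in atBot, π N p ≠ π N q := fun p q => eventually_mk_ne_mk
  have hlift : lampshuffler G ≤ (asymptoticLifts atBot π).map (MonoidHom.fst _ _) :=
    lampshuffler_le_iff.2 ⟨fun g => ⟨_, toPermHom_mem_asymptoticLifts g, rfl⟩,
      fun p q => ⟨_, swap_mem_asymptoticLifts hπ p q, rfl⟩⟩
  have hlift' (σ : lampshuffler G) :
      ∃ s : ∀ N : FiniteIndexNormalSubgroup G, Equiv.Perm (G ⧸ N.toSubgroup),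
        (σ.1, s) ∈ asymptoticLifts atBot π := by
    obtain ⟨⟨_, s⟩, hs, rfl⟩ := hlift σ.2
    exact ⟨s, hs⟩
  choose s hs using hlift'
  refine IsLEF.of_eventually (l := atBot) (fun N σ => s σ N) (fun σ τ => ?_) fun σ τ hστ => ?_
  · exact eventually_eq_of_mem_asymptoticLifts (hs (σ * τ)) (mul_mem (hs σ) (hs τ))
  · obtain ⟨p, hp⟩ : ∃ p, σ.1 p ≠ τ.1 p := by
      by_contra! h
      exact hστ (Subtype.ext (Equiv.ext h))
    filter_upwards [(hs σ).1 p, (hs τ).1 p, hπ _ _ hp] with N hσ hτ hne heq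
    exact hne (hσ.symm.trans ((congrArg (· (π N p)) heq).trans hτ))

/-- The embedding of `G` into its lampshuffler group by left translations. -/
def lampshuffler.translation : G →* lampshuffler G :=
  (MulAction.toPermHom G G).codRestrict _ toPermHom_mem_lampshuffler

/-- The transposition of `p` and `q` as an element of the lampshuffler group. -/
def lampshuffler.transposition (p q : G) : lampshuffler G :=
  ⟨Equiv.swap p q, swap_mem_lampshuffler p q⟩

namespace lampshuffler

lemma transposition_mul_left (g p q : G) : transposition (g * p) (g * q) =
    translation g * transposition p q * (translation g)⁻¹ :=
  Subtype.ext (swap_mul_left g p q)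

lemma commute_transposition {p q r s : G} (hpr : p ≠ r) (hps : p ≠ s) (hqr : q ≠ r)
    (hqs : q ≠ s) : Commute (transposition p q) (transposition r s) := by
  refine Subtype.ext ((Equiv.mul_swap_eq_swap_mul (Equiv.swap p q) r s).trans ?_)
  rw [Equiv.swap_apply_of_ne_of_ne hpr.symm hqr.symm,
    Equiv.swap_apply_of_ne_of_ne hps.symm hqs.symm]
  rfl

lemma commutator_transposition_ne_one {a b c : G} (hab : a ≠ b) (hac : a ≠ c) (hbc : b ≠ c) :
    ⁅transposition a b, transposition b c⁆ ≠ 1 := by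
  rw [Ne, commutatorElement_eq_one_iff_mul_comm]
  intro h
  have happly : Equiv.swap a b (Equiv.swap b c a) = Equiv.swap b c (Equiv.swap a b a) :=
    congrArg (fun σ : lampshuffler G => σ.1 a) h
  rw [Equiv.swap_apply_of_ne_of_ne hab hac, Equiv.swap_apply_left, Equiv.swap_apply_left] at happly
  exact hbc happly

variable {M : Type*} [Group M]

theorem map_commutator_transposition_eq_one (φ : lampshuffler G →* M)
    [hker : Infinite (φ.comp translation).ker] (p q r s : G) :
    φ ⁅transposition p q, transposition r s⁆ = 1 := by
  obtain ⟨v, hv, hvT⟩ := (Set.infinite_coe_iff.1 hker).exists_notMem_finset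
    {r * p⁻¹, s * p⁻¹, r * q⁻¹, s * q⁻¹}
  simp only [Finset.mem_insert, Finset.mem_singleton, not_or, eq_mul_inv_iff_mul_eq] at hvT
  have hφv : φ (translation v) = 1 := hv
  have hφ : φ (transposition (v * p) (v * q)) = φ (transposition p q) := by
    simp [transposition_mul_left, hφv]
  have hcomm : Commute (transposition (v * p) (v * q)) (transposition r s) :=
    commute_transposition hvT.1 hvT.2.1 hvT.2.2.1 hvT.2.2.2
  rw [map_commutatorElement, ← hφ, commutatorElement_eq_one_iff_commute]
  exact hcomm.map φ

theorem map_commutator_transposition_eq_one_of_folnerCondition [IsMulTorsionFree G]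
    (hG : ¬ FolnerCondition G) (hM : FolnerCondition M) (φ : lampshuffler G →* M) (p q r s : G) :
    φ ⁅transposition p q, transposition r s⁆ = 1 := by
  have : Nontrivial (φ.comp translation).ker := (Subgroup.nontrivial_iff_ne_bot _).2 fun h =>
    hG (hM.of_injective _ ((MonoidHom.ker_eq_bot_iff _).1 h))
  have := infinite_of_isMulTorsionFree (φ.comp translation).ker
  exact map_commutator_transposition_eq_one φ p q r s

end lampshuffler

end Lampshuffler

/-- There exists a finitely generated sofic group that is not residually amenable: some
nontrivial element is killed by every homomorphism into a group satisfying the Følner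
condition. -/
theorem exists_fg_sofic_not_residuallyAmenable :
    ∃ (Q : Type) (_ : Group Q), Group.FG Q ∧ IsSofic Q ∧
      ∃ g : Q, g ≠ 1 ∧
        ∀ (M : Type) (_ : Group M), FolnerCondition M → ∀ φ : Q →* M, φ g = 1 := by
  have hab : FreeGroup.of true ≠ FreeGroup.of false := FreeGroup.of_injective.ne (by decide)
  have h1a : 1 ≠ FreeGroup.of true := (FreeGroup.of_ne_one true).symm
  have h1b : 1 ≠ FreeGroup.of false := (FreeGroup.of_ne_one false).symm
  refine ⟨lampshuffler (FreeGroup Bool), inferInstance, lampshuffler_fg, lampshuffler_isLEF.isSofic,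
    _, lampshuffler.commutator_transposition_ne_one h1a h1b hab, fun M _ hM φ => ?_⟩
  exact lampshuffler.map_commutator_transposition_eq_one_of_folnerCondition
    not_folnerCondition_freeGroup hM φ _ _ _ _
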